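/- There exists a universal constant C > 0 such that the following holds. Suppose θ* ∈ M and θ* = (θ*_{ij}) satisfies θ*_{ij} = θ*_i for some nondecreasing vector θ* = (θ*_1,…,θ*_{n1}) ∈ C_{n1} and all i, j (i.e., θ* is constant along each row). Then the isotonic least squares estimator satisfies R(θ*, θ̂) ≤ inf over nondecreasing vectors θ ∈ C_{n1} of { ||θ* − θ||²/n1 + C·k(θ)·σ²·(log n)⁸ / n }, where k(θ) is the number of distinct constant pieces of the vector θ. -/

import Mathlib

open MeasureTheory ProbabilityTheory

noncomputable section

/-- The set of isotonic (coordinatewise nondecreasing) `n1 × n2` matrices. -/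
def Isotonic {n1 n2 : ℕ} (θ : Fin n1 → Fin n2 → ℝ) : Prop :=
  ∀ ⦃i k : Fin n1⦄ ⦃j l : Fin n2⦄, i ≤ k → j ≤ l → θ i j ≤ θ k l

/-- Squared Frobenius norm of a matrix. -/
def frobSq {n1 n2 : ℕ} (θ : Fin n1 → Fin n2 → ℝ) : ℝ :=
  ∑ i, ∑ j, θ i j ^ 2

/-- The law of an `n1 × n2` matrix with i.i.d. `N(0, σ²)` entries. -/
def noiseMeasure (n1 n2 : ℕ) (σ : ℝ) : Measure (Fin n1 → Fin n2 → ℝ) :=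
  Measure.pi fun _ => Measure.pi fun _ => gaussianReal 0 ⟨σ ^ 2, sq_nonneg σ⟩

/-- `lse` is the least squares estimator: for every data matrix `y`, `lse y` minimizes
the squared Frobenius distance to `y` over the cone of isotonic matrices. -/
def IsLSE {n1 n2 : ℕ} (lse : (Fin n1 → Fin n2 → ℝ) → Fin n1 → Fin n2 → ℝ) : Prop :=
  ∀ y, Isotonic (lse y) ∧ ∀ θ, Isotonic θ → frobSq (y - lse y) ≤ frobSq (y - θ)

/-- The risk `R(θ*, est) = E ‖est(θ* + ε) − θ*‖² / n`, where `ε` has i.i.d. `N(0,σ²)`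
entries and `n = n1 n2`. -/
def risk {n1 n2 : ℕ} (σ : ℝ) (θstar : Fin n1 → Fin n2 → ℝ)
    (est : (Fin n1 → Fin n2 → ℝ) → Fin n1 → Fin n2 → ℝ) : ℝ :=
  (∫ ε, frobSq (est (θstar + ε) - θstar) ∂noiseMeasure n1 n2 σ) / (n1 * n2)

/-- The number of distinct values of a vector. -/
def kVec {m : ℕ} (θ : Fin m → ℝ) : ℕ := (Finset.image θ Finset.univ).card

/-- Every sum of `e` over a rectangle inside `[0, m) × [0, n)` is at most `G` times the square
root of the area of the rectangle. -/
def RectBound (m n : ℕ) (G : ℝ) (e : ℕ → ℕ → ℝ) : Prop :=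
  ∀ ⦃a b c d : ℕ⦄, a ≤ b → b ≤ m → c ≤ d → d ≤ n →
    |∑ i ∈ Finset.Ico a b, ∑ j ∈ Finset.Ico c d, e i j| ≤
      G * √(((b - a : ℕ) : ℝ) * ((d - c : ℕ) : ℝ))

/-- Young diagram with `2 ^ a` rows, left margin `b` and width at most `B`. -/
lemma RectBound.abs_sum_block_le {m n : ℕ} {G : ℝ} {e : ℕ → ℕ → ℝ} (hG : 0 ≤ G)
    (he : RectBound m n G e) {l : ℕ → ℕ} (hl : Antitone l) (hln : ∀ i, l i ≤ n)
    (hlm : ∀ i, m ≤ i → l i = 0) (a : ℕ) :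
    ∀ i₀ b B : ℕ, (∀ i ∈ Finset.Ico i₀ (i₀ + 2 ^ a), b ≤ l i) → l i₀ ≤ b + B →
      |∑ i ∈ Finset.Ico i₀ (i₀ + 2 ^ a), ∑ j ∈ Finset.Ico b (l i), e i j| ≤
        G * (a + 1) * √((2 : ℝ) ^ a * B) := by
  induction a with
  | zero =>
    intro i₀ b B hb hB
    rcases Nat.lt_or_ge i₀ m with h | h
    · have := he (Nat.le_succ i₀) h (hb i₀ (by simp)) (hln i₀)
      simp only [pow_zero, Nat.Ico_succ_singleton, Finset.sum_singleton,
        Nat.succ_eq_add_one] at this ⊢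
      refine this.trans ?_
      have h2 : ((l i₀ - b : ℕ) : ℝ) ≤ B := by exact_mod_cast (by omega)
      simp only [Nat.add_sub_cancel_left, Nat.cast_zero, zero_add, mul_one, one_mul,
        Nat.cast_one]
      gcongr
    · simp only [pow_zero, Nat.Ico_succ_singleton, Finset.sum_singleton, hlm i₀ h]
      simp only [Nat.zero_le, Finset.Ico_eq_empty_of_le, Finset.sum_empty, abs_zero]
      positivity
  | succ a ih =>
    intro i₀ b B hb hB
    have hpos : 0 < 2 ^ a := by positivity
    have hpow : 2 ^ (a + 1) = 2 ^ a + 2 ^ a := by ring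
    set mid := i₀ + 2 ^ a with hmid
    have hend : i₀ + 2 ^ (a + 1) = mid + 2 ^ a := by omega
    set c := l mid with hc
    have hbc : b ≤ c := hb mid (by simp only [Finset.mem_Ico]; omega)
    have hcl : c ≤ l i₀ := hl (by omega)
    rw [hend, ← Finset.sum_Ico_consecutive _ (show i₀ ≤ mid by omega)
      (show mid ≤ mid + 2 ^ a by omega)]
    have hsplit : ∑ i ∈ Finset.Ico i₀ mid, ∑ j ∈ Finset.Ico b (l i), e i j =
        ∑ i ∈ Finset.Ico i₀ mid, ∑ j ∈ Finset.Ico b c, e i j +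
        ∑ i ∈ Finset.Ico i₀ mid, ∑ j ∈ Finset.Ico c (l i), e i j := by
      rw [← Finset.sum_add_distrib]
      refine Finset.sum_congr rfl fun i hi => ?_
      rw [Finset.mem_Ico] at hi
      exact (Finset.sum_Ico_consecutive _ hbc (hl hi.2.le)).symm
    rw [hsplit]
    have h1 : |∑ i ∈ Finset.Ico i₀ mid, ∑ j ∈ Finset.Ico b c, e i j| ≤
        G * √((2 : ℝ) ^ a * ((c - b : ℕ) : ℝ)) := by
      rcases Nat.lt_or_ge mid m with h | h
      · have := he (show i₀ ≤ mid by omega) h.le hbc (hln mid)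
        rwa [show mid - i₀ = 2 ^ a by omega, Nat.cast_pow, Nat.cast_ofNat] at this
      · have h0 : c = 0 := hlm mid h
        simp only [h0, Nat.zero_le, Finset.Ico_eq_empty_of_le, Finset.sum_empty,
          Finset.sum_const_zero, abs_zero]
        positivity
    have h2 := ih i₀ c (B - (c - b))
      (fun i hi => hl (by rw [Finset.mem_Ico] at hi; omega)) (by omega)
    have h3 := ih mid b (c - b)
      (fun i hi => hb i (by rw [Finset.mem_Ico] at hi ⊢; omega)) (by omega)
    have hx : ((B - (c - b) : ℕ) : ℝ) + ((c - b : ℕ) : ℝ) = B := by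
      exact_mod_cast (by omega)
    generalize hX : ((B - (c - b) : ℕ) : ℝ) = X at *
    generalize hY : ((c - b : ℕ) : ℝ) = Y at *
    have hX0 : 0 ≤ X := hX ▸ Nat.cast_nonneg _
    have hY0 : 0 ≤ Y := hY ▸ Nat.cast_nonneg _
    have hp : (0 : ℝ) < 2 ^ a := by positivity
    have k1 : √((2 : ℝ) ^ a * Y) ≤ √((2 : ℝ) ^ (a + 1) * B) := by
      apply Real.sqrt_le_sqrt
      rw [← hx, pow_succ]; nlinarith [mul_nonneg hp.le hX0, mul_nonneg hp.le hY0]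
    have k2 : √((2 : ℝ) ^ a * X) + √((2 : ℝ) ^ a * Y) ≤ √((2 : ℝ) ^ (a + 1) * B) := by
      apply Real.le_sqrt_of_sq_le
      have e1 := Real.sq_sqrt (mul_nonneg hp.le hX0)
      have e2 := Real.sq_sqrt (mul_nonneg hp.le hY0)
      rw [← hx, pow_succ (2 : ℝ)]
      nlinarith [sq_nonneg (√((2 : ℝ) ^ a * X) - √((2 : ℝ) ^ a * Y))]
    refine ((abs_add_le _ _).trans (add_le_add_left (abs_add_le _ _) _)).trans ?_
    calc _ ≤ G * √((2 : ℝ) ^ a * Y) + G * (a + 1) * √((2 : ℝ) ^ a * X) +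
            G * (a + 1) * √((2 : ℝ) ^ a * Y) := by gcongr
      _ = G * √((2 : ℝ) ^ a * Y) +
            G * (a + 1) * (√((2 : ℝ) ^ a * X) + √((2 : ℝ) ^ a * Y)) := by ring
      _ ≤ G * √((2 : ℝ) ^ (a + 1) * B) + G * (a + 1) * √((2 : ℝ) ^ (a + 1) * B) := by gcongr
      _ = _ := by push_cast; ring

lemma RectBound.abs_sum_young_le {m n : ℕ} {G : ℝ} {e : ℕ → ℕ → ℝ} (hG : 0 ≤ G)
    (he : RectBound m n G e) {l : ℕ → ℕ} (hl : Antitone l) (hln : ∀ i, l i ≤ n)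
    (hlm : ∀ i, m ≤ i → l i = 0) {L : ℕ} (hL : m < 2 ^ L) :
    |∑ i ∈ Finset.range m, ∑ j ∈ Finset.range (l i), e i j| ≤
      G * L ^ 2 * √(∑ i ∈ Finset.range m, (l i : ℝ)) := by
  set s : ℝ := ∑ i ∈ Finset.range m, (l i : ℝ) with hs
  have hwide : ∀ a : ℕ, (2 : ℝ) ^ a * (l (2 ^ a - 1) : ℝ) ≤ s := by
    intro a
    have hpos : 0 < 2 ^ a := by positivity
    rcases Nat.lt_or_ge (2 ^ a - 1) m with h | h
    · calc (2 : ℝ) ^ a * (l (2 ^ a - 1) : ℝ)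
          = ∑ i ∈ Finset.range (2 ^ a), (l (2 ^ a - 1) : ℝ) := by simp
        _ ≤ ∑ i ∈ Finset.range (2 ^ a), (l i : ℝ) := by
          refine Finset.sum_le_sum fun i hi => ?_
          rw [Finset.mem_range] at hi
          exact_mod_cast hl (by omega)
        _ ≤ s := Finset.sum_le_sum_of_subset_of_nonneg
          (Finset.range_subset_range.2 (by omega)) fun _ _ _ => Nat.cast_nonneg _
    · rw [hlm _ h]; simp only [Nat.cast_zero, mul_zero]
      exact Finset.sum_nonneg fun _ _ => Nat.cast_nonneg _
  have key : ∀ K : ℕ, |∑ i ∈ Finset.range (2 ^ K - 1), ∑ j ∈ Finset.range (l i), e i j| ≤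
      G * K ^ 2 * √s := by
    intro K
    induction K with
    | zero => simp
    | succ K ih =>
      have hpos : 0 < 2 ^ K := by positivity
      have hpow : 2 ^ (K + 1) = 2 ^ K + 2 ^ K := by ring
      have hend : 2 ^ (K + 1) - 1 = (2 ^ K - 1) + 2 ^ K := by omega
      rw [hend, ← Finset.sum_range_add_sum_Ico _ (show 2 ^ K - 1 ≤ 2 ^ K - 1 + 2 ^ K by omega)]
      have hb := he.abs_sum_block_le hG hl hln hlm K (2 ^ K - 1) 0 (l (2 ^ K - 1))
        (fun _ _ => Nat.zero_le _) (by omega)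
      simp only [Nat.Ico_zero_eq_range] at hb
      have h3 : √((2 : ℝ) ^ K * (l (2 ^ K - 1) : ℝ)) ≤ √s := Real.sqrt_le_sqrt (hwide K)
      calc _ ≤ _ := abs_add_le _ _
        _ ≤ G * K ^ 2 * √s + G * (K + 1) * √s := by
          refine add_le_add ih (hb.trans ?_); gcongr
        _ ≤ _ := by
          have : 0 ≤ G * √s * K := by positivity
          push_cast; nlinarith
  convert key L using 2
  refine Finset.sum_subset (Finset.range_subset_range.2 (by omega)) fun i _ hi => ?_
  rw [Finset.mem_range, not_lt] at hi
  simp [hlm i hi]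

/-- For antitone rows, the superlevel set of row `i` at height `t` is an initial segment. -/
lemma lt_card_superlevel_iff {n : ℕ} {f : ℕ → ℝ}
    (hf : ∀ ⦃j l⦄, j ≤ l → l < n → f l ≤ f j) (t : ℝ) (j : ℕ) :
    j < ((Finset.range n).filter fun l => t < f l).card ↔ j < n ∧ t < f j := by
  set S := (Finset.range n).filter fun l => t < f l with hS
  have hmem : ∀ l, l ∈ S ↔ l < n ∧ t < f l := by simp [hS]
  have hS' : S = Finset.range S.card := by
    have hsub : S ⊆ Finset.range S.card := by
      intro l hl
      have hl' := (hmem l).1 hl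
      have : Finset.range (l + 1) ⊆ S := by
        intro k hk
        rw [Finset.mem_range] at hk
        exact (hmem k).2 ⟨by omega, hl'.2.trans_le (hf (by omega) hl'.1)⟩
      have := Finset.card_le_card this
      rw [Finset.card_range] at this
      exact Finset.mem_range.2 this
    exact Finset.eq_of_subset_of_card_le hsub (by simp)
  rw [← hmem, ← Finset.mem_range, ← hS']

lemma RectBound.abs_sum_superlevel_le {m n : ℕ} {G : ℝ} {e x : ℕ → ℕ → ℝ} (hG : 0 ≤ G)
    (he : RectBound m n G e)
    (hx : ∀ ⦃i k j l⦄, i ≤ k → k < m → j ≤ l → l < n → x k l ≤ x i j)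
    {L : ℕ} (hL : m < 2 ^ L) (t : ℝ) :
    |∑ i ∈ Finset.range m, ∑ j ∈ Finset.range n, e i j * (if t < x i j then 1 else 0)| ≤
      G * L ^ 2 * √(∑ i ∈ Finset.range m, ∑ j ∈ Finset.range n,
        (if t < x i j then (1 : ℝ) else 0)) := by
  set l : ℕ → ℕ := fun i =>
    if i < m then ((Finset.range n).filter fun j => t < x i j).card else 0 with hl
  have hanti : Antitone l := by
    intro i k hik
    simp only [hl]
    split_ifs with h1 h2
    · refine Finset.card_le_card fun j hj => ?_
      simp only [Finset.mem_filter, Finset.mem_range] at hj ⊢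
      exact ⟨hj.1, hj.2.trans_le (hx hik h1 le_rfl hj.1)⟩
    · omega
    all_goals omega
  have hln : ∀ i, l i ≤ n := by
    intro i
    simp only [hl]
    split_ifs
    · exact (Finset.card_filter_le _ _).trans (by simp)
    · omega
  have hlm : ∀ i, m ≤ i → l i = 0 := fun i hi => by simp [hl, not_lt.2 hi]
  have main := he.abs_sum_young_le hG hanti hln hlm hL
  have e1 : ∀ i ∈ Finset.range m, ∑ j ∈ Finset.range (l i), e i j =
      ∑ j ∈ Finset.range n, e i j * (if t < x i j then 1 else 0) := by
    intro i hi
    rw [Finset.mem_range] at hi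
    simp only [mul_ite, mul_one, mul_zero]
    rw [← Finset.sum_filter]
    refine Finset.sum_congr ?_ fun _ _ => rfl
    ext j
    simp only [hl, hi, if_true, Finset.mem_range, Finset.mem_filter]
    exact lt_card_superlevel_iff (fun a b hab hb => hx le_rfl hi hab hb) t j
  have e2 : ∀ i ∈ Finset.range m, (l i : ℝ) =
      ∑ j ∈ Finset.range n, (if t < x i j then (1 : ℝ) else 0) := by
    intro i hi
    rw [Finset.mem_range] at hi
    simp [hl, hi]
  rwa [Finset.sum_congr rfl e1, Finset.sum_congr rfl e2] at main

lemma intervalIntegrable_indicator_lt (y a b : ℝ) :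
    IntervalIntegrable (fun t : ℝ => if t < y then (1 : ℝ) else 0) volume a b := by
  have : Antitone (fun t : ℝ => if t < y then (1 : ℝ) else 0) := by
    intro s t hst
    simp only
    split_ifs <;> linarith
  exact this.intervalIntegrable

lemma integral_indicator_lt {y : ℝ} (h0 : 0 ≤ y) (h1 : y ≤ 1) :
    ∫ t in (0 : ℝ)..1, (if t < y then (1 : ℝ) else 0) = y := by
  rw [← intervalIntegral.integral_add_adjacent_intervals
    (intervalIntegrable_indicator_lt y 0 y) (intervalIntegrable_indicator_lt y y 1)]
  have e1 : ∫ t in (0 : ℝ)..y, (if t < y then (1 : ℝ) else 0) = ∫ t in (0 : ℝ)..y, (1 : ℝ) := by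
    refine intervalIntegral.integral_congr_ae ?_
    filter_upwards [Measure.ae_ne volume y] with t ht hmem
    rw [Set.uIoc_of_le h0] at hmem
    simp [lt_of_le_of_ne hmem.2 ht]
  have e2 : ∫ t in y..1, (if t < y then (1 : ℝ) else 0) = ∫ t in y..1, (0 : ℝ) := by
    refine intervalIntegral.integral_congr fun t ht => ?_
    rw [Set.uIcc_of_le h1] at ht
    simp [not_lt.2 ht.1]
  rw [e1, e2]; simp

lemma RectBound.abs_sum_mul_le_of_sum_sq_le_one {m n : ℕ} {G : ℝ} {e x : ℕ → ℕ → ℝ} (hG : 0 ≤ G)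
    (he : RectBound m n G e)
    (hx : ∀ ⦃i k j l⦄, i ≤ k → k < m → j ≤ l → l < n → x k l ≤ x i j)
    (hx0 : ∀ i j, 0 ≤ x i j)
    (hx1 : ∑ i ∈ Finset.range m, ∑ j ∈ Finset.range n, x i j ^ 2 ≤ 1)
    {L : ℕ} (hL : m < 2 ^ L) {N : ℝ} (hN : (m : ℝ) * n ≤ N) (hN4 : 4 ≤ N) :
    |∑ i ∈ Finset.range m, ∑ j ∈ Finset.range n, e i j * x i j| ≤
      G * L ^ 2 * (2 * Real.log N) := by
  have hxle : ∀ i ∈ Finset.range m, ∀ j ∈ Finset.range n, x i j ≤ 1 := by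
    intro i hi j hj
    have h1 : x i j ^ 2 ≤ ∑ j ∈ Finset.range n, x i j ^ 2 :=
      Finset.single_le_sum (f := fun j => x i j ^ 2) (fun _ _ => sq_nonneg _) hj
    have h2 : ∑ j ∈ Finset.range n, x i j ^ 2 ≤
        ∑ i ∈ Finset.range m, ∑ j ∈ Finset.range n, x i j ^ 2 :=
      Finset.single_le_sum (f := fun i => ∑ j ∈ Finset.range n, x i j ^ 2)
        (fun _ _ => Finset.sum_nonneg fun _ _ => sq_nonneg _) hi
    nlinarith
  have hrep : ∑ i ∈ Finset.range m, ∑ j ∈ Finset.range n, e i j * x i j =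
      ∫ t in (0 : ℝ)..1, ∑ i ∈ Finset.range m, ∑ j ∈ Finset.range n,
        e i j * (if t < x i j then 1 else 0) := by
    have hint : ∀ i j, IntervalIntegrable
        (fun t : ℝ => e i j * (if t < x i j then (1 : ℝ) else 0)) volume 0 1 :=
      fun i j => (intervalIntegrable_indicator_lt _ _ _).const_mul _
    rw [intervalIntegral.integral_finsetSum]
    · refine Finset.sum_congr rfl fun i hi => ?_
      rw [intervalIntegral.integral_finsetSum fun j _ => hint i j]
      refine Finset.sum_congr rfl fun j hj => ?_
      rw [intervalIntegral.integral_const_mul, integral_indicator_lt (hx0 i j) (hxle i hi j hj)]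
    · intro i _
      simpa [Finset.sum_fn] using IntervalIntegrable.sum (Finset.range n) fun j _ => hint i j
  have hsN : 2 ≤ √N := Real.le_sqrt_of_sq_le (by linarith)
  set δ : ℝ := (√N)⁻¹ with hδ
  have hδ0 : 0 < δ := by positivity
  have hδN : δ ^ 2 * N = 1 := by
    rw [hδ, inv_pow, Real.sq_sqrt (by linarith)]; field_simp
  have hptw : ∀ t ∈ Set.Ioc (0 : ℝ) 1,
      ‖∑ i ∈ Finset.range m, ∑ j ∈ Finset.range n, e i j * (if t < x i j then 1 else 0)‖ ≤
        G * L ^ 2 * 2 * (t + δ)⁻¹ := by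
    intro t ht
    refine (he.abs_sum_superlevel_le hG hx hL t).trans ?_
    rw [mul_assoc (G * (L : ℝ) ^ 2)]
    gcongr
    set s := ∑ i ∈ Finset.range m, ∑ j ∈ Finset.range n, (if t < x i j then (1 : ℝ) else 0)
      with hs
    have hs0 : 0 ≤ s := Finset.sum_nonneg fun _ _ => Finset.sum_nonneg fun _ _ => by
      split_ifs <;> norm_num
    have hsN : s ≤ N := by
      refine le_trans ?_ hN
      calc s ≤ ∑ i ∈ Finset.range m, ∑ j ∈ Finset.range n, (1 : ℝ) :=
            Finset.sum_le_sum fun _ _ => Finset.sum_le_sum fun _ _ => by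
              split_ifs <;> norm_num
        _ = m * n := by simp
    have hst : t ^ 2 * s ≤ 1 := by
      refine le_trans ?_ hx1
      simp only [hs, Finset.mul_sum]
      refine Finset.sum_le_sum fun i _ => Finset.sum_le_sum fun j _ => ?_
      split_ifs with h
      · have := ht.1; nlinarith
      · simpa using sq_nonneg (x i j)
    have hpos : 0 < t + δ := by linarith [ht.1]
    rw [← div_eq_mul_inv, Real.sqrt_le_left (by positivity), div_pow, le_div_iff₀ (by positivity)]
    have h1 : δ ^ 2 * s ≤ 1 := by
      rw [← hδN]; gcongr
    nlinarith [mul_nonneg hs0 (sq_nonneg (t - δ))]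
  have hbint : IntervalIntegrable (fun t : ℝ => G * L ^ 2 * 2 * (t + δ)⁻¹) volume 0 1 := by
    refine ContinuousOn.intervalIntegrable ?_
    rw [Set.uIcc_of_le zero_le_one]
    refine continuousOn_const.mul (ContinuousOn.inv₀ (by fun_prop) fun t ht => ?_)
    have := ht.1
    positivity
  have hval : ∫ t in (0 : ℝ)..1, G * L ^ 2 * 2 * (t + δ)⁻¹ =
      G * L ^ 2 * 2 * Real.log ((1 + δ) / δ) := by
    rw [intervalIntegral.integral_const_mul,
      intervalIntegral.integral_comp_add_right (fun t => t⁻¹), zero_add,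
      integral_inv_of_pos hδ0 (by positivity)]
  rw [hrep, ← Real.norm_eq_abs]
  refine (intervalIntegral.norm_integral_le_of_norm_le zero_le_one
    (Filter.Eventually.of_forall hptw) hbint).trans ?_
  rw [hval, mul_assoc (G * (L : ℝ) ^ 2)]
  have hlast : (1 + δ) / δ ≤ N := by
    have : (1 + δ) / δ = √N + 1 := by rw [hδ]; field_simp
    rw [this]
    nlinarith [Real.sq_sqrt (show 0 ≤ N by linarith)]
  gcongr

lemma RectBound.abs_sum_mul_le {m n : ℕ} {G : ℝ} {e x : ℕ → ℕ → ℝ} (hG : 0 ≤ G)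
    (he : RectBound m n G e)
    (hx : ∀ ⦃i k j l⦄, i ≤ k → k < m → j ≤ l → l < n → x k l ≤ x i j)
    (hx0 : ∀ i j, 0 ≤ x i j)
    {L : ℕ} (hL : m < 2 ^ L) {N : ℝ} (hN : (m : ℝ) * n ≤ N) (hN4 : 4 ≤ N) :
    |∑ i ∈ Finset.range m, ∑ j ∈ Finset.range n, e i j * x i j| ≤
      G * L ^ 2 * (2 * Real.log N) *
        √(∑ i ∈ Finset.range m, ∑ j ∈ Finset.range n, x i j ^ 2) := by
  set S := ∑ i ∈ Finset.range m, ∑ j ∈ Finset.range n, x i j ^ 2 with hS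
  have hS0 : 0 ≤ S := Finset.sum_nonneg fun _ _ => Finset.sum_nonneg fun _ _ => sq_nonneg _
  rcases hS0.eq_or_lt with h | h
  · have hz : ∀ i ∈ Finset.range m, ∀ j ∈ Finset.range n, x i j = 0 := by
      intro i hi j hj
      have h1 := (Finset.sum_eq_zero_iff_of_nonneg
        fun _ _ => Finset.sum_nonneg fun _ _ => sq_nonneg _).1 h.symm i hi
      have h2 := (Finset.sum_eq_zero_iff_of_nonneg fun _ _ => sq_nonneg _).1 h1 j hj
      exact pow_eq_zero_iff two_ne_zero |>.1 h2
    rw [Finset.sum_eq_zero fun i hi => Finset.sum_eq_zero fun j hj => by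
      rw [hz i hi j hj, mul_zero], ← h]
    simp
  · have hr : 0 < √S := Real.sqrt_pos.2 h
    have := he.abs_sum_mul_le_of_sum_sq_le_one (x := fun i j => x i j / √S) hG
      (fun i k j l h1 h2 h3 h4 => div_le_div_of_nonneg_right (hx h1 h2 h3 h4) hr.le)
      (fun i j => div_nonneg (hx0 i j) hr.le)
      (by simp only [div_pow, ← Finset.sum_div, Real.sq_sqrt hS0]
          exact (div_self h.ne').le) hL hN hN4
    simp only [mul_div_assoc', ← Finset.sum_div] at this
    rwa [abs_div, abs_of_pos hr, div_le_iff₀ hr] at this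

/-- On an antitone nonnegative matrix the noise functional is controlled quadratically. -/
lemma RectBound.two_mul_sum_sub_sq_le {m n : ℕ} {G : ℝ} {e x : ℕ → ℕ → ℝ} (hG : 0 ≤ G)
    (he : RectBound m n G e)
    (hx : ∀ ⦃i k j l⦄, i ≤ k → k < m → j ≤ l → l < n → x k l ≤ x i j)
    (hx0 : ∀ i j, 0 ≤ x i j)
    {L : ℕ} (hL : m < 2 ^ L) {N : ℝ} (hN : (m : ℝ) * n ≤ N) (hN4 : 4 ≤ N) :
    ∑ i ∈ Finset.range m, ∑ j ∈ Finset.range n, (2 * e i j * x i j - x i j ^ 2) ≤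
      (G * L ^ 2 * (2 * Real.log N)) ^ 2 := by
  have h := (le_abs_self _).trans (he.abs_sum_mul_le hG hx hx0 hL hN hN4)
  have hS0 : 0 ≤ ∑ i ∈ Finset.range m, ∑ j ∈ Finset.range n, x i j ^ 2 :=
    Finset.sum_nonneg fun _ _ => Finset.sum_nonneg fun _ _ => sq_nonneg _
  have hsq := Real.sq_sqrt hS0
  simp only [Finset.sum_sub_distrib, mul_assoc, ← Finset.mul_sum] at h ⊢
  nlinarith [sq_nonneg (G * (L ^ 2 * (2 * Real.log N)) -
    √(∑ i ∈ Finset.range m, ∑ j ∈ Finset.range n, x i j ^ 2))]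

lemma RectBound.neg {m n : ℕ} {G : ℝ} {e : ℕ → ℕ → ℝ} (he : RectBound m n G e) :
    RectBound m n G fun i j => -e i j := by
  intro a b c d h1 h2 h3 h4
  simpa only [Finset.sum_neg_distrib, abs_neg] using he h1 h2 h3 h4

lemma RectBound.shift {m n : ℕ} {G : ℝ} {e : ℕ → ℕ → ℝ} (he : RectBound m n G e) {p q : ℕ}
    (hq : q ≤ m) : RectBound (q - p) n G fun i j => e (p + i) j := by
  intro a b c d h1 h2 h3 h4
  rcases Nat.eq_zero_or_pos b with rfl | hb
  · obtain rfl : a = 0 := by omega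
    simp
  have := he (show p + a ≤ p + b by omega) (by omega) h3 h4
  rwa [show p + b - (p + a) = b - a by omega, add_comm p a, add_comm p b,
    ← Finset.sum_Ico_add (fun i => ∑ j ∈ Finset.Ico c d, e i j)] at this

lemma RectBound.reflect {m n : ℕ} {G : ℝ} {e : ℕ → ℕ → ℝ} (he : RectBound m n G e) {p q : ℕ}
    (hq : q ≤ m) : RectBound (q - p) n G fun i j => e (q - 1 - i) (n - 1 - j) := by
  intro a b c d h1 h2 h3 h4
  rcases Nat.eq_zero_or_pos b with rfl | hb
  · obtain rfl : a = 0 := by omega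
    simp
  rcases Nat.eq_zero_or_pos d with rfl | hd
  · obtain rfl : c = 0 := by omega
    simp
  have := he (show q - b ≤ q - a by omega) (by omega) (show n - d ≤ n - c by omega) (by omega)
  rw [show q - a - (q - b) = b - a by omega, show n - c - (n - d) = d - c by omega] at this
  convert this using 2
  rw [Finset.sum_Ico_reflect (fun i => ∑ j ∈ Finset.Ico c d, e i (n - 1 - j)) a
    (show b ≤ q - 1 + 1 by omega), show q - 1 + 1 = q by omega]
  refine Finset.sum_congr rfl fun i _ => ?_
  rw [Finset.sum_Ico_reflect (fun j => e i j) c (show d ≤ n - 1 + 1 by omega),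
    show n - 1 + 1 = n by omega]

/-- Noise functional on an isotonic matrix supported on the rows `[p, q)`. -/
lemma RectBound.two_mul_sum_sub_sq_le_of_isotonic {m n : ℕ} {G : ℝ} {e v : ℕ → ℕ → ℝ} (hG : 0 ≤ G)
    (he : RectBound m n G e) {p q : ℕ} (hpq : p ≤ q) (hq : q ≤ m)
    (hv : ∀ ⦃i k j l⦄, p ≤ i → i ≤ k → k < q → j ≤ l → l < n → v i j ≤ v k l)
    {L : ℕ} (hL : m < 2 ^ L) {N : ℝ} (hN : (m : ℝ) * n ≤ N) (hN4 : 4 ≤ N) :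
    ∑ i ∈ Finset.Ico p q, ∑ j ∈ Finset.range n, (2 * e i j * v i j - v i j ^ 2) ≤
      2 * (G * L ^ 2 * (2 * Real.log N)) ^ 2 := by
  have hN' : ((q - p : ℕ) : ℝ) * n ≤ N := by
    refine le_trans ?_ hN
    gcongr
    omega
  have hneg := (he.shift (p := p) hq).neg.two_mul_sum_sub_sq_le
    (x := fun i j => max (-v (p + i) j) 0)
    hG (fun i k j l h1 h2 h3 h4 => max_le_max_right _
      (neg_le_neg (hv (by omega) (by omega) (by omega) h3 h4)))
    (fun _ _ => le_max_right _ _) (show q - p < 2 ^ L by omega) hN' hN4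
  have hpos := (he.reflect (p := p) hq).two_mul_sum_sub_sq_le
    (x := fun i j => max (v (q - 1 - i) (n - 1 - j)) 0)
    hG (fun i k j l h1 h2 h3 h4 => max_le_max_right _
      (hv (by omega) (by omega) (by omega) (by omega) (by omega)))
    (fun _ _ => le_max_right _ _) (show q - p < 2 ^ L by omega) hN' hN4
  have eneg : ∑ i ∈ Finset.Ico p q, ∑ j ∈ Finset.range n,
      (2 * -e i j * max (-v i j) 0 - max (-v i j) 0 ^ 2) ≤
      (G * L ^ 2 * (2 * Real.log N)) ^ 2 := by
    rwa [Finset.sum_Ico_eq_sum_range]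
  have epos : ∑ i ∈ Finset.Ico p q, ∑ j ∈ Finset.range n,
      (2 * e i j * max (v i j) 0 - max (v i j) 0 ^ 2) ≤
      (G * L ^ 2 * (2 * Real.log N)) ^ 2 := by
    rcases hpq.eq_or_lt with rfl | hlt
    · rw [Finset.Ico_self, Finset.sum_empty]; positivity
    refine le_of_eq_of_le ?_ hpos
    rw [Finset.range_eq_Ico (q - p), Finset.sum_Ico_reflect (fun i => ∑ j ∈ Finset.range n,
        (2 * e i (n - 1 - j) * max (v i (n - 1 - j)) 0 - max (v i (n - 1 - j)) 0 ^ 2)) 0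
      (show q - p ≤ q - 1 + 1 by omega), show q - 1 + 1 - (q - p) = p by omega,
      show q - 1 + 1 - 0 = q by omega]
    refine Finset.sum_congr rfl fun i _ => ?_
    rw [Finset.sum_range_reflect (fun j => 2 * e i j * max (v i j) 0 - max (v i j) 0 ^ 2)]
  have hsum : ∑ i ∈ Finset.Ico p q, ∑ j ∈ Finset.range n, (2 * e i j * v i j - v i j ^ 2) =
      ∑ i ∈ Finset.Ico p q, ∑ j ∈ Finset.range n,
        (2 * e i j * max (v i j) 0 - max (v i j) 0 ^ 2) +
      ∑ i ∈ Finset.Ico p q, ∑ j ∈ Finset.range n,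
        (2 * -e i j * max (-v i j) 0 - max (-v i j) 0 ^ 2) := by
    simp only [← Finset.sum_add_distrib]
    refine Finset.sum_congr rfl fun i _ => Finset.sum_congr rfl fun j _ => ?_
    rcases le_total 0 (v i j) with h | h
    · rw [max_eq_left h, max_eq_right (by linarith)]; ring
    · rw [max_eq_right h, max_eq_left (by linarith)]; ring
  rw [hsum]; linarith

lemma noiseMeasure_eq (n1 n2 : ℕ) (σ : ℝ) : noiseMeasure n1 n2 σ =
    Measure.pi fun _ => Measure.pi fun _ => gaussianReal 0 (σ ^ 2).toNNReal := by
  rw [noiseMeasure, Real.toNNReal_of_nonneg (sq_nonneg σ)]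
  rfl

instance (n1 n2 : ℕ) (σ : ℝ) : IsProbabilityMeasure (noiseMeasure n1 n2 σ) := by
  rw [noiseMeasure_eq]; infer_instance

lemma integrable_exp_sum_noiseMeasure {n1 n2 : ℕ} (σ : ℝ) (w : Fin n1 → Fin n2 → ℝ) :
    Integrable (fun ε => Real.exp (∑ i, ∑ j, w i j * ε i j)) (noiseMeasure n1 n2 σ) := by
  simp only [Real.exp_sum]
  rw [noiseMeasure_eq]
  exact Integrable.fintype_prod (f := fun i (y : Fin n2 → ℝ) => ∏ j, Real.exp (w i j * y j))
    fun i => Integrable.fintype_prod (f := fun j y => Real.exp (w i j * y))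
      fun j => integrable_exp_mul_gaussianReal _

lemma integral_exp_sum_noiseMeasure {n1 n2 : ℕ} (σ : ℝ) (w : Fin n1 → Fin n2 → ℝ) :
    ∫ ε, Real.exp (∑ i, ∑ j, w i j * ε i j) ∂noiseMeasure n1 n2 σ =
      Real.exp (σ ^ 2 / 2 * ∑ i, ∑ j, w i j ^ 2) := by
  have h1 : ∀ t : ℝ, ∫ y, Real.exp (t * y) ∂gaussianReal 0 (σ ^ 2).toNNReal =
      Real.exp (σ ^ 2 / 2 * t ^ 2) := by
    intro t
    have := congrFun (mgf_id_gaussianReal (μ := 0) (v := (σ ^ 2).toNNReal)) t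
    simp only [mgf, id] at this
    rw [this]
    congr 1
    rw [Real.coe_toNNReal _ (sq_nonneg σ)]
    ring
  simp only [Real.exp_sum, Finset.mul_sum]
  rw [noiseMeasure_eq]
  rw [integral_fintype_prod_eq_prod (fun i (y : Fin n2 → ℝ) => ∏ j, Real.exp (w i j * y j))]
  refine Finset.prod_congr rfl fun i _ => ?_
  rw [integral_fintype_prod_eq_prod (fun j (y : ℝ) => Real.exp (w i j * y))]
  exact Finset.prod_congr rfl fun j _ => h1 _

/-- Extension of a matrix by zero to all pairs of natural numbers. -/
def extendZero {n1 n2 : ℕ} (ε : Fin n1 → Fin n2 → ℝ) (i j : ℕ) : ℝ :=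
  if h : i < n1 ∧ j < n2 then ε ⟨i, h.1⟩ ⟨j, h.2⟩ else 0

@[simp]
lemma extendZero_coe {n1 n2 : ℕ} (ε : Fin n1 → Fin n2 → ℝ) (i : Fin n1) (j : Fin n2) :
    extendZero ε i j = ε i j := by
  simp [extendZero]

lemma sum_Ico_eq_sum_fin {n a b : ℕ} (hb : b ≤ n) (f : ℕ → ℝ) :
    ∑ i ∈ Finset.Ico a b, f i = ∑ i : Fin n, (if a ≤ i.1 ∧ i.1 < b then 1 else 0) * f i := by
  rw [← Finset.sum_range (fun i => (if a ≤ i ∧ i < b then (1 : ℝ) else 0) * f i)]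
  simp only [ite_mul, one_mul, zero_mul]
  rw [← Finset.sum_filter]
  refine Finset.sum_congr ?_ fun _ _ => rfl
  ext i
  simp only [Finset.mem_Ico, Finset.mem_filter, Finset.mem_range]
  omega

/-- The pairs of (possibly empty) intervals in the two directions of an `n1 × n2` grid. -/
abbrev RectIndex (n1 n2 : ℕ) : Type :=
  (Fin (n1 + 1) × Fin (n1 + 1)) × (Fin (n2 + 1) × Fin (n2 + 1))

/-- The indicator of a rectangle, scaled to have Euclidean norm at most one. -/
def rectWeight {n1 n2 : ℕ} (r : RectIndex n1 n2) (i : Fin n1) (j : Fin n2) : ℝ :=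
  (if r.1.1.1 ≤ i.1 ∧ i.1 < r.1.2.1 then 1 else 0) *
    (if r.2.1.1 ≤ j.1 ∧ j.1 < r.2.2.1 then 1 else 0) /
    √(((r.1.2.1 - r.1.1.1 : ℕ) : ℝ) * ((r.2.2.1 - r.2.1.1 : ℕ) : ℝ))

lemma sum_rectWeight_sq_le {n1 n2 : ℕ} (r : RectIndex n1 n2) :
    ∑ i, ∑ j, rectWeight r i j ^ 2 ≤ 1 := by
  obtain ⟨⟨a, b⟩, ⟨c, d⟩⟩ := r
  have h1 := sum_Ico_eq_sum_fin (a := a.1) (Nat.lt_succ_iff.1 b.2) (fun _ => 1)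
  have h2 := sum_Ico_eq_sum_fin (a := c.1) (Nat.lt_succ_iff.1 d.2) (fun _ => 1)
  simp only [Finset.sum_const, Nat.card_Ico, nsmul_eq_mul, mul_one] at h1 h2
  have h0 : (0 : ℝ) ≤ ((b.1 - a.1 : ℕ) : ℝ) * ((d.1 - c.1 : ℕ) : ℝ) := by positivity
  simp only [rectWeight, div_pow, Real.sq_sqrt h0, mul_pow, ite_pow, one_pow, zero_pow two_ne_zero,
    ← Finset.sum_div, ← Finset.mul_sum, ← Finset.sum_mul, ← h1, ← h2]
  exact div_self_le_one _

/-- The normalized noise on a rectangle. -/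
def rectNoise {n1 n2 : ℕ} (σ : ℝ) (r : RectIndex n1 n2) (ε : Fin n1 → Fin n2 → ℝ) : ℝ :=
  ∑ i, ∑ j, (rectWeight r i j / σ) * ε i j

/-- An integrable upper bound for the squared noise level over all rectangles. -/
def noiseLevelSq {n1 n2 : ℕ} (σ : ℝ) (ε : Fin n1 → Fin n2 → ℝ) : ℝ :=
  σ ^ 2 * (2 * Real.log (Fintype.card (RectIndex n1 n2)) ^ 2 +
    8 * ((∑ r : RectIndex n1 n2, (Real.exp (rectNoise σ r ε) + Real.exp (-rectNoise σ r ε))) /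
      Fintype.card (RectIndex n1 n2)))

lemma noiseLevelSq_nonneg {n1 n2 : ℕ} (σ : ℝ) (ε : Fin n1 → Fin n2 → ℝ) :
    0 ≤ noiseLevelSq σ ε := by
  unfold noiseLevelSq; positivity

lemma rectNoise_sq_le {n1 n2 : ℕ} (σ : ℝ) (ε : Fin n1 → Fin n2 → ℝ) (r : RectIndex n1 n2) :
    σ ^ 2 * rectNoise σ r ε ^ 2 ≤ noiseLevelSq σ ε := by
  unfold noiseLevelSq
  gcongr
  set Q : ℝ := (Fintype.card (RectIndex n1 n2) : ℝ) with hQ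
  have hQ1 : 1 ≤ Q := by
    rw [hQ]; exact_mod_cast Fintype.card_pos
  set T := ∑ r : RectIndex n1 n2, (Real.exp (rectNoise σ r ε) + Real.exp (-rectNoise σ r ε))
    with hT
  set z := rectNoise σ r ε with hz
  have hle : Real.exp |z| ≤ T := by
    have h1 : Real.exp z + Real.exp (-z) ≤ T :=
      Finset.single_le_sum (f := fun r : RectIndex n1 n2 =>
        Real.exp (rectNoise σ r ε) + Real.exp (-rectNoise σ r ε))
        (fun _ _ => by positivity) (Finset.mem_univ r)
    rcases abs_cases z with h | h <;> rw [h.1] <;>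
      linarith [Real.exp_pos z, Real.exp_pos (-z)]
  have hT2 : 1 ≤ T / Q := by
    rw [le_div_iff₀ (by linarith), one_mul, hQ, ← Finset.card_univ, Finset.cast_card]
    refine Finset.sum_le_sum fun r _ => ?_
    have := Real.add_one_le_exp (rectNoise σ r ε)
    have := Real.add_one_le_exp (-rectNoise σ r ε)
    linarith
  set S := T / Q with hS
  have hTS : T = Q * S := by rw [hS]; field_simp
  have hlog : |z| ≤ Real.log Q + Real.log S := by
    rw [← Real.log_mul (by linarith) (by linarith), ← hTS]
    rw [← Real.log_exp |z|]
    exact Real.log_le_log (Real.exp_pos _) hle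
  have hlogS : Real.log S ^ 2 ≤ 4 * S := by
    have h0 : 0 ≤ Real.log S := Real.log_nonneg hT2
    have h1 : Real.log S = 2 * Real.log (√S) := by
      rw [Real.log_sqrt (by linarith)]; ring
    have h2 : Real.log (√S) ≤ √S := (Real.log_le_sub_one_of_pos
      (Real.sqrt_pos.2 (by linarith))).trans (by linarith)
    have h3 := Real.sq_sqrt (show 0 ≤ S by linarith)
    have h4 : Real.log S ≤ 2 * √S := by linarith
    nlinarith
  have h5 : z ^ 2 ≤ (Real.log Q + Real.log S) ^ 2 := by
    rw [← sq_abs]; gcongr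
  nlinarith [sq_nonneg (Real.log Q - Real.log S)]

lemma rectBound_extendZero {n1 n2 : ℕ} {σ : ℝ} (hσ : 0 < σ) (ε : Fin n1 → Fin n2 → ℝ) :
    RectBound n1 n2 (√(noiseLevelSq σ ε)) (extendZero ε) := by
  intro a b c d hab hb hcd hd
  set A : ℝ := ((b - a : ℕ) : ℝ) * ((d - c : ℕ) : ℝ) with hA
  have hA0 : 0 ≤ A := by positivity
  rcases hA0.eq_or_lt with h | h
  · have : b - a = 0 ∨ d - c = 0 := by
      rcases mul_eq_zero.1 h.symm with h | h
      · exact Or.inl (by exact_mod_cast h)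
      · exact Or.inr (by exact_mod_cast h)
    rw [← h]
    rcases this with h | h
    · rw [Finset.Ico_eq_empty_of_le (by omega : b ≤ a)]; simp
    · rw [Finset.Ico_eq_empty_of_le (by omega : d ≤ c)]; simp
  · have hr : 0 < √A := Real.sqrt_pos.2 h
    set r : RectIndex n1 n2 := ((⟨a, by omega⟩, ⟨b, by omega⟩), (⟨c, by omega⟩, ⟨d, by omega⟩))
      with hrr
    have hsum : ∑ i ∈ Finset.Ico a b, ∑ j ∈ Finset.Ico c d, extendZero ε i j =
        σ * rectNoise σ r ε * √A := by
      rw [sum_Ico_eq_sum_fin hb]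
      simp only [sum_Ico_eq_sum_fin hd, extendZero_coe, rectNoise, rectWeight, hrr,
        Finset.mul_sum, Finset.sum_mul, ← hA]
      refine Finset.sum_congr rfl fun i _ => Finset.sum_congr rfl fun j _ => ?_
      field_simp
    rw [hsum, abs_mul, abs_of_pos hr]
    gcongr
    apply Real.abs_le_sqrt
    rw [mul_pow]
    exact rectNoise_sq_le σ ε r

lemma integrable_exp_rectNoise {n1 n2 : ℕ} (σ : ℝ) (r : RectIndex n1 n2) :
    Integrable (fun ε => Real.exp (rectNoise σ r ε) + Real.exp (-rectNoise σ r ε))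
      (noiseMeasure n1 n2 σ) := by
  have h2 := integrable_exp_sum_noiseMeasure σ fun i j => -(rectWeight r i j / σ)
  simp only [neg_mul, Finset.sum_neg_distrib] at h2
  exact (integrable_exp_sum_noiseMeasure σ fun i j => rectWeight r i j / σ).add h2

lemma integral_exp_rectNoise_le {n1 n2 : ℕ} {σ : ℝ} (hσ : 0 < σ) (r : RectIndex n1 n2) :
    ∫ ε, (Real.exp (rectNoise σ r ε) + Real.exp (-rectNoise σ r ε)) ∂noiseMeasure n1 n2 σ ≤ 4 := by
  have h2 := integrable_exp_sum_noiseMeasure σ fun i j => -(rectWeight r i j / σ)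
  have h2' := integral_exp_sum_noiseMeasure σ fun i j => -(rectWeight r i j / σ)
  simp only [neg_mul, Finset.sum_neg_distrib, neg_sq] at h2 h2'
  have h1' := integral_exp_sum_noiseMeasure σ fun i j => rectWeight r i j / σ
  have hexp : Real.exp (σ ^ 2 / 2 * ∑ i, ∑ j, (rectWeight r i j / σ) ^ 2) ≤ 2 := by
    simp only [div_pow, ← Finset.sum_div]
    have : σ ^ 2 / 2 * ((∑ i, ∑ j, rectWeight r i j ^ 2) / σ ^ 2) ≤ 1 / 2 := by
      have := sum_rectWeight_sq_le r
      field_simp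
      linarith
    refine (Real.exp_le_exp.2 this).trans ?_
    have h4 : Real.exp (1 / 2) ^ 2 = Real.exp 1 := by rw [← Real.exp_nat_mul]; norm_num
    nlinarith [Real.exp_one_lt_d9, Real.exp_pos (1 / 2)]
  unfold rectNoise
  rw [integral_add (integrable_exp_sum_noiseMeasure σ fun i j => rectWeight r i j / σ) h2, h1', h2']
  linarith

lemma integrable_noiseLevelSq {n1 n2 : ℕ} (σ : ℝ) :
    Integrable (noiseLevelSq σ) (noiseMeasure n1 n2 σ) := by
  unfold noiseLevelSq
  exact ((integrable_const _).add (((integrable_finsetSum _ fun r _ =>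
    integrable_exp_rectNoise σ r).div_const _).const_mul _)).const_mul _

lemma integral_noiseLevelSq_le {n1 n2 : ℕ} {σ : ℝ} (hσ : 0 < σ) :
    ∫ ε, noiseLevelSq σ ε ∂noiseMeasure n1 n2 σ ≤
      σ ^ 2 * (2 * Real.log (Fintype.card (RectIndex n1 n2)) ^ 2 + 32) := by
  have hint := integrable_finsetSum Finset.univ fun r (_ : r ∈ Finset.univ) =>
    integrable_exp_rectNoise (n1 := n1) (n2 := n2) σ r
  unfold noiseLevelSq
  rw [integral_const_mul, integral_add (integrable_const _) ((hint.div_const _).const_mul _),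
    integral_const_mul 8, integral_div, integral_finsetSum _ fun r _ => integrable_exp_rectNoise σ r]
  simp only [integral_const, probReal_univ, smul_eq_mul, one_mul]
  gcongr
  have : (∑ r : RectIndex n1 n2, ∫ ε, (Real.exp (rectNoise σ r ε) + Real.exp (-rectNoise σ r ε))
      ∂noiseMeasure n1 n2 σ) / Fintype.card (RectIndex n1 n2) ≤ 4 := by
    rw [div_le_iff₀ (by exact_mod_cast Fintype.card_pos)]
    refine (Finset.sum_le_sum fun r _ => integral_exp_rectNoise_le hσ r).trans ?_
    rw [Finset.sum_const, Finset.card_univ, nsmul_eq_mul, mul_comm]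
  linarith

/-- The variational inequality for the projection onto the cone of isotonic matrices. -/
lemma IsLSE.inner_nonneg {n1 n2 : ℕ} {lse : (Fin n1 → Fin n2 → ℝ) → Fin n1 → Fin n2 → ℝ}
    (h : IsLSE lse) (y : Fin n1 → Fin n2 → ℝ) {u : Fin n1 → Fin n2 → ℝ} (hu : Isotonic u) :
    0 ≤ ∑ i, ∑ j, (y i j - lse y i j) * (lse y i j - u i j) := by
  obtain ⟨hiso, hmin⟩ := h y
  set a := ∑ i, ∑ j, (y i j - lse y i j) * (lse y i j - u i j) with ha
  set b := ∑ i, ∑ j, (lse y i j - u i j) ^ 2 with hb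
  have hb0 : 0 ≤ b := Finset.sum_nonneg fun _ _ => Finset.sum_nonneg fun _ _ => sq_nonneg _
  have key : ∀ s : ℝ, 0 ≤ s → s ≤ 1 → 0 ≤ 2 * s * a + s ^ 2 * b := by
    intro s hs0 hs1
    have := hmin (fun i j => (1 - s) * lse y i j + s * u i j) fun i k j l hik hjl =>
      add_le_add (mul_le_mul_of_nonneg_left (hiso hik hjl) (by linarith))
        (mul_le_mul_of_nonneg_left (hu hik hjl) hs0)
    have heq : frobSq (y - fun i j => (1 - s) * lse y i j + s * u i j) =
        frobSq (y - lse y) + (2 * s * a + s ^ 2 * b) := by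
      simp only [frobSq, ha, hb, Finset.mul_sum, ← Finset.sum_add_distrib, Pi.sub_apply]
      refine Finset.sum_congr rfl fun i _ => Finset.sum_congr rfl fun j _ => ?_
      ring
    linarith
  by_contra! hneg
  have h1 := key (-a / (b - a)) (div_nonneg (by linarith) (by linarith))
    ((div_le_one (by linarith)).2 (by linarith))
  have hba : 0 < b - a := by linarith
  have : 2 * (-a / (b - a)) * a + (-a / (b - a)) ^ 2 * b = a ^ 2 * (2 * a - b) / (b - a) ^ 2 := by
    field_simp
    ring
  rw [this] at h1
  have h2 : a ^ 2 * (2 * a - b) / (b - a) ^ 2 < 0 :=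
    div_neg_of_neg_of_pos (mul_neg_of_pos_of_neg (sq_pos_of_neg hneg) (by linarith)) (by positivity)
  linarith

/-- Deterministic oracle inequality for the projection onto the isotonic cone. -/
lemma IsLSE.frobSq_sub_le {n1 n2 : ℕ} {lse : (Fin n1 → Fin n2 → ℝ) → Fin n1 → Fin n2 → ℝ}
    (h : IsLSE lse) (θstar ε : Fin n1 → Fin n2 → ℝ) {u : Fin n1 → Fin n2 → ℝ} (hu : Isotonic u) :
    frobSq (lse (θstar + ε) - θstar) ≤ frobSq (θstar - u) +
      ∑ i, ∑ j, (2 * ε i j * (lse (θstar + ε) i j - u i j) -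
        (lse (θstar + ε) i j - u i j) ^ 2) := by
  have h1 := h.inner_nonneg (θstar + ε) hu
  have : frobSq (θstar - u) +
      ∑ i, ∑ j, (2 * ε i j * (lse (θstar + ε) i j - u i j) -
        (lse (θstar + ε) i j - u i j) ^ 2) = frobSq (lse (θstar + ε) - θstar) +
      2 * ∑ i, ∑ j, ((θstar + ε) i j - lse (θstar + ε) i j) * (lse (θstar + ε) i j - u i j) := by
    simp only [frobSq, Finset.mul_sum, ← Finset.sum_add_distrib, Pi.sub_apply, Pi.add_apply]
    refine Finset.sum_congr rfl fun i _ => Finset.sum_congr rfl fun j _ => ?_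
    ring
  linarith

lemma exists_fiber_eq_interval_of_monotone {m : ℕ} {θ : Fin m → ℝ} (hθ : Monotone θ) {c : ℝ}
    (hc : c ∈ Finset.image θ Finset.univ) :
    ∃ p q : ℕ, p ≤ q ∧ q ≤ m ∧ ∀ i : Fin m, θ i = c ↔ p ≤ i.1 ∧ i.1 < q := by
  have hne : (Finset.univ.filter fun i => θ i = c).Nonempty := by
    obtain ⟨i, _, hi⟩ := Finset.mem_image.1 hc
    exact ⟨i, by simp [hi]⟩
  set F := Finset.univ.filter fun i => θ i = c with hF
  have hmin := F.min'_mem hne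
  have hmax := F.max'_mem hne
  have hmm : F.min' hne ≤ F.max' hne := F.min'_le _ hmax
  refine ⟨(F.min' hne).1, (F.max' hne).1 + 1, ?_, (F.max' hne).2, fun i => ⟨fun hi => ?_, ?_⟩⟩
  · exact Nat.le_succ_of_le hmm
  · have hiF : i ∈ F := by simp [hF, hi]
    exact ⟨F.min'_le _ hiF, Nat.lt_succ_of_le (F.le_max' _ hiF)⟩
  · rintro ⟨h1, h2⟩
    simp only [hF, Finset.mem_filter, Finset.mem_univ, true_and] at hmin hmax
    exact le_antisymm ((hθ (show i ≤ F.max' hne from Nat.lt_succ_iff.1 h2)).trans_eq hmax)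
      (hmin.symm.trans_le (hθ (show F.min' hne ≤ i from h1)))

/-- The noise functional on matrices which are isotonic after subtracting `θ` from the columns. -/
lemma sum_noise_sub_sq_le {n1 n2 : ℕ} {G : ℝ} (hG : 0 ≤ G) {ε : Fin n1 → Fin n2 → ℝ}
    (he : RectBound n1 n2 G (extendZero ε)) {η : Fin n1 → Fin n2 → ℝ} (hη : Isotonic η)
    {θ : Fin n1 → ℝ} (hθ : Monotone θ) {L : ℕ} (hL : n1 < 2 ^ L) {N : ℝ}
    (hN : (n1 : ℝ) * n2 ≤ N) (hN4 : 4 ≤ N) :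
    ∑ i, ∑ j, (2 * ε i j * (η i j - θ i) - (η i j - θ i) ^ 2) ≤
      kVec θ * (2 * (G * L ^ 2 * (2 * Real.log N)) ^ 2) := by
  rw [← Finset.sum_fiberwise_of_maps_to (g := θ) (t := Finset.image θ Finset.univ)
    fun i _ => Finset.mem_image_of_mem θ (Finset.mem_univ i), kVec, ← nsmul_eq_mul]
  refine Finset.sum_le_card_nsmul _ _ _ fun c hc => ?_
  obtain ⟨p, q, hpq, hq, hiff⟩ := exists_fiber_eq_interval_of_monotone hθ hc
  have := he.two_mul_sum_sub_sq_le_of_isotonic (v := extendZero fun i j => η i j - θ i) hG hpq hq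
    (fun i k j l hpi hik hkq hjl hl => by
      have hk : k < n1 := by omega
      have hi : i < n1 := by omega
      have hj : j < n2 := by omega
      have e1 := (hiff ⟨i, hi⟩).2 ⟨hpi, show i < q by omega⟩
      have e2 := (hiff ⟨k, hk⟩).2 ⟨show p ≤ k by omega, hkq⟩
      simp only [extendZero, hi, hj, hk, hl, and_self, dite_true, e1, e2]
      exact sub_le_sub_right (hη (show (⟨i, hi⟩ : Fin n1) ≤ ⟨k, hk⟩ from hik)
        (show (⟨j, hj⟩ : Fin n2) ≤ ⟨l, hl⟩ from hjl)) _) hL hN hN4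
  refine le_of_eq_of_le ?_ this
  rw [sum_Ico_eq_sum_fin hq, Finset.sum_filter]
  refine Finset.sum_congr rfl fun i _ => ?_
  simp only [Finset.sum_range, extendZero_coe, hiff, ite_mul, one_mul, zero_mul]

lemma log_card_rectIndex_le {n1 n2 : ℕ} (h1 : 1 < n1) (h2 : 1 < n2) :
    Real.log (Fintype.card (RectIndex n1 n2)) ≤ 4 * Real.log (n1 * n2) := by
  rw [show (4 : ℝ) = ((4 : ℕ) : ℝ) by norm_num, ← Real.log_pow]
  refine Real.log_le_log (by exact_mod_cast Fintype.card_pos) ?_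
  simp only [Fintype.card_prod, Fintype.card_fin]
  have k1 : n1 + 1 ≤ n1 ^ 2 := by nlinarith
  have k2 : n2 + 1 ≤ n2 ^ 2 := by nlinarith
  have : (n1 + 1) * (n1 + 1) * ((n2 + 1) * (n2 + 1)) ≤ (n1 * n2) ^ 4 :=
    calc _ ≤ n1 ^ 2 * n1 ^ 2 * (n2 ^ 2 * n2 ^ 2) := by gcongr
      _ = _ := by ring
  exact_mod_cast this

lemma natLog_add_one_le {n1 n2 : ℕ} (h1 : 1 < n1) (h2 : 1 < n2) :
    ((Nat.log 2 n1 + 1 : ℕ) : ℝ) ≤ 2 * Real.log (n1 * n2) := by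
  have hlog2 := Real.log_two_gt_d9
  have hn1 : (2 : ℝ) ≤ n1 := by exact_mod_cast h1
  have hn2 : (2 : ℝ) ≤ n2 := by exact_mod_cast h2
  have ha : (Nat.log 2 n1 : ℝ) * Real.log 2 ≤ Real.log n1 := by
    rw [← Real.log_pow]
    refine Real.log_le_log (by positivity) ?_
    exact_mod_cast Nat.pow_log_le_self 2 (by omega)
  have hb : Real.log 2 ≤ Real.log n2 := Real.log_le_log (by norm_num) hn2
  rw [Real.log_mul (by positivity) (by positivity)]
  push_cast
  have : (0 : ℝ) ≤ Nat.log 2 n1 := by positivity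
  nlinarith

/-- **Theorem 4, inequality (vara1) (variable adaptation, oracle form).** There is a
universal constant `C > 0` such that if the isotonic matrix `θ*` is constant along
each row, i.e. `θ*_{ij} = θ*_i` for a nondecreasing vector `θ* ∈ C_{n1}`, then for
every nondecreasing vector `θ ∈ C_{n1}`,
`R(θ*, θ̂) ≤ ‖θ*vec − θ‖²/n1 + C k(θ) σ² (log n)⁸ / n` with `n = n1 n2`. -/
theorem isotonic_lse_variable_adaptation_oracle :
    ∃ C : ℝ, 0 < C ∧
      ∀ (n1 n2 : ℕ), 1 < n1 → 1 < n2 → ∀ σ : ℝ, 0 < σ →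
        ∀ θstar : Fin n1 → Fin n2 → ℝ, Isotonic θstar →
          ∀ θstarVec : Fin n1 → ℝ, Monotone θstarVec →
            (∀ i j, θstar i j = θstarVec i) →
            ∀ lse, IsLSE lse →
              ∀ θ : Fin n1 → ℝ, Monotone θ →
                risk σ θstar lse ≤
                  (∑ i, (θstarVec i - θ i) ^ 2) / n1 +
                    C * kVec θ * σ ^ 2 * Real.log (n1 * n2) ^ 8 / (n1 * n2) := by
  refine ⟨8192, by norm_num, ?_⟩
  intro n1 n2 h1 h2 σ hσ θstar _ θstarVec _ hrow lse hlse θ hθ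
  set ℓ := Real.log (n1 * n2) with hℓ
  set L := Nat.log 2 n1 + 1
  have hn1 : (2 : ℝ) ≤ n1 := by exact_mod_cast h1
  have hn2 : (2 : ℝ) ≤ n2 := by exact_mod_cast h2
  have hN4 : (4 : ℝ) ≤ n1 * n2 := by nlinarith
  have hℓ1 : 1 ≤ ℓ := by
    rw [hℓ, Real.le_log_iff_exp_le (by linarith)]
    linarith [Real.exp_one_lt_d9]
  have hL : (L : ℝ) ≤ 2 * ℓ := natLog_add_one_le h1 h2
  set K : ℝ := kVec θ * (2 * (L ^ 2 * (2 * ℓ)) ^ 2) with hK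
  have hK0 : 0 ≤ K := by positivity
  have hbound : ∀ ε, frobSq (lse (θstar + ε) - θstar) ≤
      n2 * ∑ i, (θstarVec i - θ i) ^ 2 + K * noiseLevelSq σ ε := by
    intro ε
    refine (hlse.frobSq_sub_le θstar ε (u := fun i _ => θ i)
      fun i k j l hik _ => hθ hik).trans (add_le_add (le_of_eq ?_) ?_)
    · simp [frobSq, hrow, Finset.mul_sum]
    · refine (sum_noise_sub_sq_le (Real.sqrt_nonneg _) (rectBound_extendZero hσ ε)
        (hlse _).1 hθ (Nat.lt_pow_succ_log_self one_lt_two n1) le_rfl hN4).trans (le_of_eq ?_)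
      rw [hK, mul_assoc (√_), mul_pow (√_), Real.sq_sqrt (noiseLevelSq_nonneg σ ε)]
      ring
  have hintg := (integrable_noiseLevelSq (n1 := n1) (n2 := n2) σ).const_mul K
  have hrisk : ∫ ε, frobSq (lse (θstar + ε) - θstar) ∂noiseMeasure n1 n2 σ ≤
      n2 * ∑ i, (θstarVec i - θ i) ^ 2 + 8192 * kVec θ * σ ^ 2 * ℓ ^ 8 := by
    calc _ ≤ ∫ ε, (n2 * ∑ i, (θstarVec i - θ i) ^ 2 + K * noiseLevelSq σ ε)
          ∂noiseMeasure n1 n2 σ :=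
        integral_mono_of_nonneg
          (Filter.Eventually.of_forall fun ε => Finset.sum_nonneg fun _ _ =>
            Finset.sum_nonneg fun _ _ => sq_nonneg _)
          ((integrable_const _).add hintg) (Filter.Eventually.of_forall hbound)
      _ = n2 * ∑ i, (θstarVec i - θ i) ^ 2 +
          K * ∫ ε, noiseLevelSq σ ε ∂noiseMeasure n1 n2 σ := by
        rw [integral_add (integrable_const _) hintg, integral_const_mul K, integral_const,
          probReal_univ, one_smul]
      _ ≤ n2 * ∑ i, (θstarVec i - θ i) ^ 2 +
          (kVec θ * (2 * ((2 * ℓ) ^ 2 * (2 * ℓ)) ^ 2)) * (σ ^ 2 * (64 * ℓ ^ 2)) := by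
        have hlogQ := log_card_rectIndex_le h1 h2
        have hQ0 : 0 ≤ Real.log (Fintype.card (RectIndex n1 n2)) :=
          Real.log_natCast_nonneg _
        have hI : ∫ ε, noiseLevelSq σ ε ∂noiseMeasure n1 n2 σ ≤ σ ^ 2 * (64 * ℓ ^ 2) := by
          refine (integral_noiseLevelSq_le hσ).trans ?_
          gcongr
          nlinarith
        have hK' : K ≤ kVec θ * (2 * ((2 * ℓ) ^ 2 * (2 * ℓ)) ^ 2) := by
          rw [hK]; gcongr
        gcongr
        exact integral_nonneg fun ε => noiseLevelSq_nonneg σ ε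
      _ = _ := by ring
  unfold risk
  rw [div_le_iff₀ (by positivity)]
  refine hrisk.trans (le_of_eq ?_)
  field_simp
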